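/- Let K be a triangle with diameter h_K and B an edge of K. There exists a constant C such that for every v in H^2(K), ||∇v||_{L^2(B)} ≤ C |B|^{1/2} |K|^{-1/2} ( ||∇v||_{L^2(K)} + h_K ||∇²v||_{L^2(K)} ), where ∇²v is the Hessian of v. -/

import Mathlib

open MeasureTheory

abbrev E2 := EuclideanSpace ℝ (Fin 2)

lemma radial (g : E2 → E2) (hg : ContDiff ℝ 1 g) (P C : E2) (h : ℝ) (hP : ‖P - C‖ ≤ h) :
    ‖g P‖ ^ 2 ≤ ∫ s in (0:ℝ)..1, s * (3 * ‖g (C + s • (P - C))‖ ^ 2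
      + h ^ 2 * ‖fderiv ℝ g (C + s • (P - C))‖ ^ 2) := by
  have hcont : Continuous g := hg.continuous
  have hcont' : Continuous (fderiv ℝ g) := hg.continuous_fderiv (by norm_num)
  have hd : ∀ s : ℝ, HasDerivAt (fun s : ℝ => s ^ 2 * ‖g (C + s • (P - C))‖ ^ 2)
      (2 * s * ‖g (C + s • (P - C))‖ ^ 2 + s ^ 2 *
        (2 * inner ℝ (g (C + s • (P - C))) (fderiv ℝ g (C + s • (P - C)) (P - C)))) s := by
    intro s
    have h1 : HasDerivAt (fun s : ℝ => C + s • (P - C)) (P - C) s := by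
      simpa using ((hasDerivAt_id s).smul_const (P - C)).const_add C
    have h2 := ((hg.differentiable (by norm_num)) (C + s • (P - C))).hasFDerivAt.comp_hasDerivAt s h1
    have h3 := h2.norm_sq
    have h4 := (hasDerivAt_pow 2 s).mul h3
    refine HasDerivAt.congr_deriv h4 ?_
    simp
  have hI := intervalIntegral.integral_eq_sub_of_hasDerivAt (a := 0) (b := 1)
    (fun x _ => hd x) (Continuous.intervalIntegrable (by fun_prop) _ _)
  simp only [one_pow, one_smul, add_sub_cancel, one_mul, ne_eq, OfNat.ofNat_ne_zero,
    not_false_eq_true, zero_pow, zero_mul, sub_zero] at hI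
  rw [← hI]
  apply intervalIntegral.integral_mono_on zero_le_one
  · exact Continuous.intervalIntegrable (by fun_prop) _ _
  · exact Continuous.intervalIntegrable (by fun_prop) _ _
  · intro s hs
    set x := C + s • (P - C)
    have h1 : inner ℝ (g x) (fderiv ℝ g x (P - C)) ≤ ‖g x‖ * (h * ‖fderiv ℝ g x‖) := by
      refine (real_inner_le_norm _ _).trans ?_
      gcongr
      refine (ContinuousLinearMap.le_opNorm _ _).trans ?_
      rw [mul_comm]; gcongr
    have h0 : 0 ≤ h := (norm_nonneg _).trans hP
    have h2 : 2 * (‖g x‖ * (h * ‖fderiv ℝ g x‖)) ≤ ‖g x‖ ^ 2 + h ^ 2 * ‖fderiv ℝ g x‖ ^ 2 := by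
      nlinarith [sq_nonneg (‖g x‖ - h * ‖fderiv ℝ g x‖)]
    have h3 : s ^ 2 * (2 * inner ℝ (g x) (fderiv ℝ g x (P - C))) ≤
        s ^ 2 * (‖g x‖ ^ 2 + h ^ 2 * ‖fderiv ℝ g x‖ ^ 2) := by gcongr; linarith
    have h4 : s ^ 2 * (‖g x‖ ^ 2 + h ^ 2 * ‖fderiv ℝ g x‖ ^ 2) ≤
        s * (‖g x‖ ^ 2 + h ^ 2 * ‖fderiv ℝ g x‖ ^ 2) := by
      gcongr; nlinarith [hs.1, hs.2]
    linarith

def TT : Set (ℝ × ℝ) := {p | 0 ≤ p.2 ∧ p.2 ≤ p.1 ∧ p.1 ≤ 1}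

lemma TT_closed : IsClosed TT :=
  (isClosed_le continuous_const continuous_snd).inter
    ((isClosed_le continuous_snd continuous_fst).inter (isClosed_le continuous_fst continuous_const))

lemma TT_sub : TT ⊆ Set.Icc (0:ℝ) 1 ×ˢ Set.Icc (0:ℝ) 1 := by
  rintro ⟨s, w⟩ ⟨h1, h2, h3⟩
  simp only at h1 h2 h3
  exact ⟨⟨h1.trans h2, h3⟩, ⟨h1, h2.trans h3⟩⟩

lemma TT_vol : (volume TT).toReal ≤ 1 := by
  have h : volume TT ≤ 1 := by
    refine (measure_mono TT_sub).trans ?_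
    rw [Measure.volume_eq_prod, Measure.prod_prod]; simp
  simpa using ENNReal.toReal_mono (by simp) h

lemma TT_convex : Convex ℝ TT := by
  rintro ⟨a, b⟩ ⟨h1, h2, h3⟩ ⟨c, d⟩ ⟨h4, h5, h6⟩ s t hs ht hst
  simp only at h1 h2 h3 h4 h5 h6
  refine ⟨?_, ?_, ?_⟩ <;> simp only [Prod.smul_mk, Prod.mk_add_mk, smul_eq_mul]
  · positivity
  · gcongr
  · nlinarith

lemma fubini (G : ℝ × ℝ → ℝ) (hG : Continuous G) :
    ∫ t in (0:ℝ)..1, ∫ s in (0:ℝ)..1, s * G (s, s * t) = ∫ p in TT, G p := by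
  have h1 : ∫ t in (0:ℝ)..1, ∫ s in (0:ℝ)..1, s * G (s, s * t)
      = ∫ s in (0:ℝ)..1, ∫ t in (0:ℝ)..1, s * G (s, s * t) := by
    simp only [intervalIntegral.integral_of_le zero_le_one]
    refine integral_integral_swap (f := fun t s => s * G (s, s * t)) ?_
    rw [Measure.prod_restrict]
    have : IntegrableOn (Function.uncurry fun t s => s * G (s, s * t))
        (Set.Icc (0:ℝ) 1 ×ˢ Set.Icc (0:ℝ) 1) (volume.prod volume) := by
      refine ContinuousOn.integrableOn_compact (isCompact_Icc.prod isCompact_Icc) ?_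
      refine Continuous.continuousOn ?_
      simp only [Function.uncurry_def]
      fun_prop
    exact this.mono_set (Set.prod_mono Set.Ioc_subset_Icc_self Set.Ioc_subset_Icc_self)
  have h2 : ∀ s : ℝ, ∫ t in (0:ℝ)..1, s * G (s, s * t) = ∫ w in (0:ℝ)..s, G (s, w) := by
    intro s
    rw [intervalIntegral.integral_const_mul]
    have := intervalIntegral.mul_integral_comp_mul_left (a := 0) (b := 1) (f := fun w => G (s, w)) s
    simpa using this
  rw [h1]
  simp only [h2]
  have hint : IntegrableOn G TT := by
    refine IntegrableOn.mono_set ?_ TT_sub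
    exact hG.continuousOn.integrableOn_compact (isCompact_Icc.prod isCompact_Icc)
  rw [← integral_indicator TT_closed.measurableSet, Measure.volume_eq_prod, integral_prod]
  swap
  · rw [← Measure.volume_eq_prod, integrable_indicator_iff TT_closed.measurableSet]; exact hint
  rw [intervalIntegral.integral_of_le zero_le_one, ← integral_Icc_eq_integral_Ioc,
    ← integral_indicator measurableSet_Icc]
  congr 1
  ext s
  by_cases hs : s ∈ Set.Icc (0:ℝ) 1
  · rw [Set.indicator_of_mem hs, intervalIntegral.integral_of_le hs.1,
      ← integral_Icc_eq_integral_Ioc, ← integral_indicator measurableSet_Icc]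
    congr 1
    ext w
    by_cases hw : w ∈ Set.Icc 0 s
    · rw [Set.indicator_of_mem hw, Set.indicator_of_mem]
      exact ⟨hw.1, hw.2, hs.2⟩
    · rw [Set.indicator_of_notMem hw, Set.indicator_of_notMem]
      exact fun h => hw ⟨h.1, h.2.1⟩
  · rw [Set.indicator_of_notMem hs]
    symm
    convert integral_zero ℝ ℝ with w
    rw [Set.indicator_of_notMem]
    exact fun h => hs ⟨h.1.trans h.2.1, h.2.2⟩

lemma seg_int (A B : E2) (hAB : A ≠ B) (f : E2 → ℝ) :
    ∫ x in segment ℝ A B, f x ∂μH[1] = dist A B * ∫ t in (0:ℝ)..1, f (A + t • (B - A)) := by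
  set d := dist A B with hd
  have hd0 : 0 < d := dist_pos.2 hAB
  have hd' : ‖B - A‖ = d := by rw [hd, dist_comm, dist_eq_norm]
  let ι : ℝ → E2 := fun r => A + (r / d) • (B - A)
  have hι : Isometry ι := by
    refine Isometry.of_dist_eq fun x y => ?_
    rw [dist_eq_norm, dist_eq_norm]
    have : ι x - ι y = ((x - y) / d) • (B - A) := by
      simp only [ι]; rw [add_sub_add_left_eq_sub, ← sub_smul, sub_div]
    rw [this, norm_smul, norm_div, hd', Real.norm_of_nonneg hd0.le]; field_simp
  have hmap := hι.map_hausdorffMeasure (d := 1) (Or.inl zero_le_one)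
  rw [hausdorffMeasure_real] at hmap
  have hsub : segment ℝ A B ⊆ Set.range ι := by
    rw [segment_eq_image']
    rintro _ ⟨t, -, rfl⟩
    exact ⟨t * d, by simp [ι, hd0.ne']⟩
  have hpre : ι ⁻¹' (segment ℝ A B) = Set.Icc 0 d := by
    rw [segment_eq_image']
    ext r
    constructor
    · rintro ⟨t, ht, h⟩
      have h1 : t = r / d := by
        have : t • (B - A) = (r / d) • (B - A) := add_left_cancel h
        exact smul_left_injective ℝ (sub_ne_zero.2 hAB.symm) this
      subst h1
      exact ⟨by simpa using (le_div_iff₀ hd0).1 ht.1, (div_le_one hd0).1 ht.2⟩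
    · intro hr
      exact ⟨r / d, ⟨div_nonneg hr.1 hd0.le, (div_le_one hd0).2 hr.2⟩, rfl⟩
  have h1 : (μH[1] : Measure E2).restrict (segment ℝ A B)
      = (Measure.map ι volume).restrict (segment ℝ A B) := by
    rw [hmap, Measure.restrict_restrict_of_subset hsub]
  rw [h1, (hι.isClosedEmbedding.measurableEmbedding).setIntegral_map, hpre,
    integral_Icc_eq_integral_Ioc, ← intervalIntegral.integral_of_le hd0.le]
  have := intervalIntegral.integral_comp_div (a := 0) (b := d) (fun t => f (A + t • (B - A))) hd0.ne'
  simpa [hd0.ne'] using this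

lemma tri (A B C : E2) (hABC : AffineIndependent ℝ ![A, B, C])
    (hpos : 0 < (volume (convexHull ℝ {A, B, C})).toReal) (F : E2 → ℝ) (hF : Continuous F)
    (hF0 : ∀ x, 0 ≤ F x) :
    ∫ p in TT, F (C + (p.1 • (A - C) + p.2 • (B - A))) ≤
      (volume (convexHull ℝ {A, B, C})).toReal⁻¹ * ∫ x in convexHull ℝ {A, B, C}, F x := by
  set K := convexHull ℝ {A, B, C} with hK
  let L₀ : ℝ × ℝ →ₗ[ℝ] E2 :=
    (LinearMap.fst ℝ ℝ ℝ).smulRight (A - C) + (LinearMap.snd ℝ ℝ ℝ).smulRight (B - A)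
  have hL₀ : ∀ p, L₀ p = p.1 • (A - C) + p.2 • (B - A) := fun p => rfl
  have hinj : Function.Injective L₀ := by
    rw [← LinearMap.ker_eq_bot, LinearMap.ker_eq_bot']
    rintro ⟨s, w⟩ h
    rw [hL₀] at h
    rw [affineIndependent_iff] at hABC
    have := hABC Finset.univ ![s - w, w, -s] (by simp [Fin.sum_univ_three])
      (by
        simp only [Fin.sum_univ_three, Matrix.cons_val]
        rw [← h]; module)
    have h1 := this 1 (Finset.mem_univ _)
    have h2 := this 2 (Finset.mem_univ _)
    simp at h1 h2
    simp [h1, h2]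
  let L : (ℝ × ℝ) ≃L[ℝ] E2 :=
    (L₀.linearEquivOfInjective hinj (by simp)).toContinuousLinearEquiv
  have hL : ∀ p, L p = p.1 • (A - C) + p.2 • (B - A) := fun p => rfl
  let φ : ℝ × ℝ → E2 := fun p => C + L p
  have hφ : ∀ p, φ p = (1 - p.1) • C + (p.1 - p.2) • A + p.2 • B := by
    intro p; simp only [φ, hL]; module
  have hφinj : Function.Injective φ := fun x y h => L.injective (add_left_cancel h)
  have hφc : Continuous φ := continuous_const.add L.continuous
  have hKφ : K = φ '' TT := by
    apply Set.Subset.antisymm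
    · refine convexHull_min ?_ ?_
      · rintro x (rfl | rfl | rfl)
        · exact ⟨(1, 0), by simp [TT], by simp [hφ]⟩
        · exact ⟨(1, 1), by simp [TT], by simp [hφ]⟩
        · exact ⟨(0, 0), by simp [TT], by simp [hφ]⟩
      · have : φ '' TT = (fun x => C + x) '' (L.toLinearMap '' TT) := by
          rw [Set.image_image]; rfl
        rw [this]
        exact (TT_convex.linear_image _).translate C
    · rintro _ ⟨⟨s, w⟩, ⟨h1, h2, h3⟩, rfl⟩
      simp only at h1 h2 h3
      rw [hφ]
      have hc : Convex ℝ K := convex_convexHull _ _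
      have hA : A ∈ K := subset_convexHull _ _ (by simp)
      have hB : B ∈ K := subset_convexHull _ _ (by simp)
      have hC : C ∈ K := subset_convexHull _ _ (by simp)
      have := hc.sum_mem (t := Finset.univ) (w := ![1 - s, s - w, w]) (z := ![C, A, B])
        (by intro i _; fin_cases i <;> simp <;> linarith)
        (by simp [Fin.sum_univ_three])
        (by intro i _; fin_cases i <;> simpa)
      simpa [Fin.sum_univ_three] using this
  have hpre : φ ⁻¹' K = TT := by rw [hKφ, Set.preimage_image_eq _ hφinj]
  have hKm : MeasurableSet K := by
    have hc : IsCompact K := by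
      rw [hKφ]
      exact ((isCompact_Icc.prod isCompact_Icc).of_isClosed_subset TT_closed TT_sub).image hφc
    exact hc.measurableSet
  have : (Measure.map L (volume : Measure (ℝ × ℝ))).IsAddHaarMeasure := L.isAddHaarMeasure_map _
  obtain ⟨c, hc⟩ : ∃ c : NNReal, Measure.map L (volume : Measure (ℝ × ℝ)) = c • (volume : Measure E2) :=
    ⟨_, Measure.isAddLeftInvariant_eq_smul _ _⟩
  have hmap : Measure.map φ volume = c • (volume : Measure E2) := by
    have : φ = (fun x => C + x) ∘ L := rfl
    rw [this, ← Measure.map_map (by fun_prop) L.continuous.measurable, hc]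
    rw [Measure.map_smul, map_add_left_eq_self]
  have h1 : ∫ p in TT, F (φ p) = c * ∫ x in K, F x := by
    rw [← hpre, ← setIntegral_map hKm hF.aestronglyMeasurable hφc.aemeasurable, hmap,
      Measure.restrict_smul, integral_smul_nnreal_measure]
    rfl
  have h2 : (c : ℝ) * (volume K).toReal ≤ 1 := by
    have : volume TT = c • volume K := by
      rw [← hpre, ← Measure.map_apply hφc.measurable hKm, hmap]; rfl
    have h := TT_vol
    rw [this] at h
    simpa [ENNReal.smul_def] using h
  change ∫ p in TT, F (φ p) ≤ _
  rw [h1]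
  have h3 : 0 ≤ ∫ x in K, F x := integral_nonneg hF0
  gcongr
  rw [← one_div, le_div_iff₀ hpos]; exact h2

/-- Standard trace inequality for the gradient on a triangle: for any
shape-regularity bound `ρ` there is a constant `C` such that for every
`v ∈ H²(K)` (represented here by a `C²` function),
`‖∇v‖_{L²(B)} ≤ C |B|^{1/2} |K|^{-1/2} (‖∇v‖_{L²(K)} + h_K ‖∇²v‖_{L²(K)})`,
where `∇²v` is the Hessian of `v`, `B` an edge of the triangle `K`. -/
theorem stmt1 (ρ : ℝ) (hρ : 0 < ρ) :
    ∃ C : ℝ, 0 < C ∧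
      ∀ A B Cv : E2, AffineIndependent ℝ ![A, B, Cv] →
        Metric.diam (convexHull ℝ {A, B, Cv}) ^ 2
            ≤ ρ * (volume (convexHull ℝ {A, B, Cv})).toReal →
        ∀ v : E2 → ℝ, ContDiff ℝ 2 v →
          Real.sqrt (∫ x in segment ℝ A B, ‖gradient v x‖ ^ 2 ∂μH[1])
            ≤ C * Real.sqrt (dist A B)
                * (Real.sqrt ((volume (convexHull ℝ {A, B, Cv})).toReal))⁻¹
                * (Real.sqrt (∫ x in convexHull ℝ {A, B, Cv}, ‖gradient v x‖ ^ 2)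
                    + Metric.diam (convexHull ℝ {A, B, Cv})
                      * Real.sqrt (∫ x in convexHull ℝ {A, B, Cv},
                          ‖fderiv ℝ (fun y => gradient v y) x‖ ^ 2)) := by
  refine ⟨2, by norm_num, fun A B C hABC hshape v hv => ?_⟩
  have hAB : A ≠ B := by
    have := hABC.injective.ne (show (0 : Fin 3) ≠ 1 by decide)
    simpa using this
  set K := convexHull ℝ {A, B, C} with hK
  have hfin : Set.Finite ({A, B, C} : Set E2) := by simp
  have hKc : IsCompact K := hfin.isCompact_convexHull ℝ
  have hA : A ∈ K := subset_convexHull _ _ (by simp)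
  have hB : B ∈ K := subset_convexHull _ _ (by simp)
  have hC : C ∈ K := subset_convexHull _ _ (by simp)
  set h := Metric.diam K with hh
  have hh0 : 0 < h := (dist_pos.2 hAB).trans_le (Metric.dist_le_diam_of_mem hKc.isBounded hA hB)
  have hpos : 0 < (volume K).toReal := by
    by_contra hcon
    have : ρ * (volume K).toReal ≤ 0 := mul_nonpos_of_nonneg_of_nonpos hρ.le (not_lt.1 hcon)
    have := pow_pos hh0 2
    linarith
  have hg : ContDiff ℝ 1 (fun y => gradient v y) := by
    have h1 : ContDiff ℝ 1 (fderiv ℝ v) := hv.fderiv_right (by norm_num)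
    exact (InnerProductSpace.toDual ℝ E2).symm.contDiff.comp h1
  set g : E2 → E2 := fun y => gradient v y with hgdef
  have hgc : Continuous g := hg.continuous
  have hgc' : Continuous (fderiv ℝ g) := hg.continuous_fderiv (by norm_num)
  let F : E2 → ℝ := fun x => 3 * ‖g x‖ ^ 2 + h ^ 2 * ‖fderiv ℝ g x‖ ^ 2
  have hF : Continuous F := by fun_prop
  have hF0 : ∀ x, 0 ≤ F x := fun x => by positivity
  have hseg : ∫ x in segment ℝ A B, ‖g x‖ ^ 2 ∂μH[1] ≤
      dist A B * ((volume K).toReal⁻¹ * ∫ x in K, F x) := by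
    rw [seg_int A B hAB]
    gcongr
    refine le_trans ?_ (tri A B C hABC hpos F hF hF0)
    rw [← fubini (fun p => F (C + (p.1 • (A - C) + p.2 • (B - A)))) (by fun_prop)]
    refine intervalIntegral.integral_mono_on zero_le_one
      (Continuous.intervalIntegrable (by fun_prop) _ _)
      (Continuous.intervalIntegrable ?_ _ _) ?_
    · apply intervalIntegral.continuous_parametric_intervalIntegral_of_continuous'
      fun_prop
    · intro t ht
      have hP : A + t • (B - A) ∈ K := by
        apply segment_subset_convexHull (show A ∈ ({A, B, C} : Set E2) by simp)
          (show B ∈ ({A, B, C} : Set E2) by simp)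
        rw [segment_eq_image']
        exact ⟨t, ht, rfl⟩
      have := radial g hg (A + t • (B - A)) C h (by
        rw [← dist_eq_norm]; exact Metric.dist_le_diam_of_mem hKc.isBounded hP hC)
      refine this.trans (le_of_eq ?_)
      congr 1
      ext s
      have e : C + s • (A + t • (B - A) - C) = C + (s • (A - C) + (s * t) • (B - A)) := by module
      simp only [F, e]
  set X := ∫ x in K, ‖g x‖ ^ 2 with hX
  set Y := ∫ x in K, ‖fderiv ℝ g x‖ ^ 2 with hY
  have hX0 : 0 ≤ X := integral_nonneg fun x => by positivity
  have hY0 : 0 ≤ Y := integral_nonneg fun x => by positivity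
  have hFint : ∫ x in K, F x = 3 * X + h ^ 2 * Y := by
    simp only [F]
    rw [integral_add, integral_const_mul, integral_const_mul]
    · exact (Continuous.continuousOn (by fun_prop)).integrableOn_compact hKc
    · exact (Continuous.continuousOn (by fun_prop)).integrableOn_compact hKc
  rw [hFint] at hseg
  apply Real.sqrt_le_iff.2
  refine ⟨by positivity, hseg.trans ?_⟩
  rw [mul_pow, mul_pow, mul_pow, inv_pow, Real.sq_sqrt dist_nonneg, Real.sq_sqrt hpos.le,
    show (2:ℝ) ^ 2 * dist A B * (volume K).toReal⁻¹ * (√X + h * √Y) ^ 2 =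
      dist A B * ((volume K).toReal⁻¹ * (4 * (√X + h * √Y) ^ 2)) by ring]
  gcongr
  have e1 := Real.sq_sqrt hX0
  have e2 := Real.sq_sqrt hY0
  have e3 : 0 ≤ √X * (h * √Y) := by positivity
  have e4 : 0 ≤ h ^ 2 * Y := by positivity
  calc 3 * X + h ^ 2 * Y ≤ 4 * (X + h ^ 2 * Y + 2 * (√X * (h * √Y))) := by linarith
    _ = 4 * (√X + h * √Y) ^ 2 := by
      rw [add_sq, mul_pow, e1, e2]; ring
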